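/- Let $P \subset \mathbb{R}^d$ be a centrally symmetric polytope, that is, the convex hull of finitely many points with $P = -P$, and let $u$ and $v$ be vertices of $P$ (possibly $u = v$). Write $P + u = \{x + u : x \in P\}$. A face of $P$ is the intersection of $P$ with a supporting hyperplane of $P$, and an edge of $P$ is a face of dimension $1$ (so for $d = 1$ the segment $P$ is not an edge of itself). If the interiors in $\mathbb{R}^d$ of the translates $P + u$ and $P + v$ intersect, then the segment $[u, -v]$ is not an edge of $P$. -/

import Mathlib

open scoped Pointwise

/-- A centrally symmetric polytope in `ℝ^d`: the convex hull of a finite set of points,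
with `P = -P`. -/
def IsCSPolytope {d : ℕ} (P : Set (EuclideanSpace ℝ (Fin d))) : Prop :=
  (∃ V : Finset (EuclideanSpace ℝ (Fin d)),
    P = convexHull ℝ (V : Set (EuclideanSpace ℝ (Fin d)))) ∧
  P = -P

/-- `H` is a supporting hyperplane of `P`: a hyperplane `{x | ⟪a, x⟫ = c}` with normal vector
`a ≠ 0` that meets `P` and has `P` on one side. -/
def IsSupportingHyperplane {d : ℕ} (P H : Set (EuclideanSpace ℝ (Fin d))) : Prop :=
  ∃ (a : EuclideanSpace ℝ (Fin d)) (c : ℝ), a ≠ 0 ∧ H = {x | inner ℝ a x = c} ∧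
    (∀ x ∈ P, inner ℝ a x ≤ c) ∧ (P ∩ H).Nonempty

/-- A face of `P` is the intersection of `P` with a supporting hyperplane. In particular `P` is
not a face of itself unless it lies in a hyperplane. -/
def IsFace {d : ℕ} (P F : Set (EuclideanSpace ℝ (Fin d))) : Prop :=
  ∃ H : Set (EuclideanSpace ℝ (Fin d)), IsSupportingHyperplane P H ∧ F = P ∩ H

/-- An edge of `P` is a face of (affine) dimension one. -/
def IsEdge {d : ℕ} (P F : Set (EuclideanSpace ℝ (Fin d))) : Prop :=
  IsFace P F ∧ Module.finrank ℝ (vectorSpan ℝ F) = 1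

/-- A set on which the linear functional `⟪a, ·⟫` with `a ≠ 0` vanishes has empty interior. -/
theorem interior_eq_empty_of_inner_eq_zero {E : Type*} [NormedAddCommGroup E]
    [InnerProductSpace ℝ E] {a : E} (ha : a ≠ 0) {s : Set E} (hs : ∀ x ∈ s, inner ℝ a x = 0) :
    interior s = ∅ := by
  by_contra h
  have hsub : s ⊆ ((ℝ ∙ a)ᗮ : Submodule ℝ E) := fun x hx =>
    Submodule.mem_orthogonal_singleton_iff_inner_right.2 (hs x hx)
  have htop : (ℝ ∙ a)ᗮ = ⊤ := Submodule.eq_top_of_nonempty_interior' _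
    ((Set.nonempty_iff_ne_empty.2 h).mono (interior_mono hsub))
  have hmem : a ∈ (ℝ ∙ a)ᗮ := htop ▸ Submodule.mem_top
  exact ha (inner_self_eq_zero.1 (Submodule.mem_orthogonal_singleton_iff_inner_right.1 hmem))

/-- If `u` and `-v` lie on a common face of a symmetric set `P`, then the interiors of `P + u`
and `P + v` are disjoint: a translate of the supporting hyperplane separates them. -/
theorem interior_translates_inter_eq_empty_of_isFace {d : ℕ}
    {P F : Set (EuclideanSpace ℝ (Fin d))} (hP : P = -P) (hF : IsFace P F)
    {u v : EuclideanSpace ℝ (Fin d)} (hu : u ∈ F) (hv : -v ∈ F) :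
    interior ((· + u) '' P) ∩ interior ((· + v) '' P) = ∅ := by
  obtain ⟨H, ⟨a, c, ha, rfl, hle, -⟩, rfl⟩ := hF
  have hau : inner ℝ a u = c := hu.2
  have hav : inner ℝ a (-v) = c := hv.2
  rw [inner_neg_right] at hav
  rw [← interior_inter]
  refine interior_eq_empty_of_inner_eq_zero ha ?_
  rintro z ⟨⟨x, hx, rfl⟩, ⟨y, hy, hxy⟩⟩
  have hnx : -x ∈ P := by rw [hP]; simpa using hx
  have hx' := hle _ hnx
  have hy' := hle _ hy
  have hxy' := congrArg (inner ℝ a) hxy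
  simp only [inner_add_right, inner_neg_right] at hx' hxy' ⊢
  linarith

/-- If `u, v` are vertices of a centrally symmetric polytope `P` and the interiors of the
translates `P + u` and `P + v` intersect, then `[u, -v]` is not an edge of `P`. -/
theorem stmt_6 (d : ℕ) (P : Set (EuclideanSpace ℝ (Fin d))) (hP : IsCSPolytope P)
    (u v : EuclideanSpace ℝ (Fin d))
    (hu : u ∈ Set.extremePoints ℝ P) (hv : v ∈ Set.extremePoints ℝ P)
    (hint : (interior ((· + u) '' P) ∩ interior ((· + v) '' P)).Nonempty) :
    ¬ IsEdge P (segment ℝ u (-v)) := fun hE =>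
  hint.ne_empty (interior_translates_inter_eq_empty_of_isFace hP.2 hE.1
    (left_mem_segment ℝ u (-v)) (right_mem_segment ℝ u (-v)))
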